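/- Let X be the isominimal realization in ℛ₂ of a respecting forest P of order 2. Then X is closed under lh and lh₂: for every β ∈ X, both lh(β) = max{γ : β ≤₁ γ} and lh₂(β) = max{γ : β ≤₂ γ} exist and belong to X. Hence isominimal realizations are tight: no ≤₁- or ≤₂-connection from an element of X extends beyond the largest such connection within X. -/

import Mathlib

open FirstOrder

/-- The relation symbols of the language of `ℛ₂`: three binary relations. -/
inductive ordRel : ℕ → Type
  | le : ordRel 2
  | le1 : ordRel 2
  | le2 : ordRel 2

/-- The first-order language with three binary relation symbols `≤`, `≤₁`, `≤₂`. -/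
def ordLang : FirstOrder.Language := ⟨fun _ => Empty, ordRel⟩

/-- The `ordLang`-structure on the set of ordinals below `β`, interpreting the three
relation symbols by `≤` and the given relations `le1`, `le2`. -/
def segStr (le1 le2 : Ordinal → Ordinal → Prop) (β : Ordinal) :
    ordLang.Structure {x : Ordinal // x < β} where
  funMap := fun f => Empty.elim f
  RelMap
    | .le => fun v => (v 0).1 ≤ (v 1).1
    | .le1 => fun v => le1 (v 0).1 (v 1).1
    | .le2 => fun v => le2 (v 0).1 (v 1).1

/-- Σ₁-formulas: a block of existential quantifiers applied to a quantifier-free formula. -/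
inductive IsSigma1 {L : FirstOrder.Language} {α : Type} :
    {n : ℕ} → L.BoundedFormula α n → Prop
  | of_isQF {n} {φ : L.BoundedFormula α n} (h : φ.IsQF) : IsSigma1 φ
  | ex {n} {φ : L.BoundedFormula α (n + 1)} (h : IsSigma1 φ) : IsSigma1 φ.ex

/-- Π₁-formulas: a block of universal quantifiers applied to a quantifier-free formula. -/
inductive IsPi1 {L : FirstOrder.Language} {α : Type} :
    {n : ℕ} → L.BoundedFormula α n → Prop
  | of_isQF {n} {φ : L.BoundedFormula α n} (h : φ.IsQF) : IsPi1 φ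
  | all {n} {φ : L.BoundedFormula α (n + 1)} (h : IsPi1 φ) : IsPi1 φ.all

/-- Σ₂-formulas: a block of existential quantifiers applied to a Π₁-formula. -/
inductive IsSigma2 {L : FirstOrder.Language} {α : Type} :
    {n : ℕ} → L.BoundedFormula α n → Prop
  | of_isPi1 {n} {φ : L.BoundedFormula α n} (h : IsPi1 φ) : IsSigma2 φ
  | ex {n} {φ : L.BoundedFormula α (n + 1)} (h : IsSigma2 φ) : IsSigma2 φ.ex

/-- Realization of a formula with `k` parameters in the segment structure below `β`. -/
def RealizeIn (le1 le2 : Ordinal → Ordinal → Prop) (β : Ordinal) {k : ℕ}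
    (φ : ordLang.Formula (Fin k)) (v : Fin k → {x : Ordinal // x < β}) : Prop :=
  letI := segStr le1 le2 β
  φ.Realize v

/-- `a ≤ b` and the segment below `a` is an elementary substructure of the segment below `b`
with respect to the class `C` of formulas (with parameters from below `a`). -/
def ElemSub (C : ∀ k : ℕ, ordLang.Formula (Fin k) → Prop)
    (le1 le2 : Ordinal → Ordinal → Prop) (a b : Ordinal) : Prop :=
  ∃ hab : a ≤ b,
    ∀ (k : ℕ) (φ : ordLang.Formula (Fin k)), C k φ →
      ∀ v : Fin k → {x : Ordinal // x < a},
        RealizeIn le1 le2 a φ v ↔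
          RealizeIn le1 le2 b φ (fun j => ⟨(v j).1, lt_of_lt_of_le (v j).2 hab⟩)

/-- The pair of relations `le1`, `le2` satisfies the simultaneous recursive definition of
`≤₁` and `≤₂` on the ordinals: `α ≤ᵢ β` iff `α ≤ β` and the segment below `α` is a
Σᵢ-elementary substructure of the segment below `β`. -/
def IsR2Pair (le1 le2 : Ordinal → Ordinal → Prop) : Prop :=
  (∀ a b, le1 a b ↔ ElemSub (fun _ φ => IsSigma1 φ) le1 le2 a b) ∧
  (∀ a b, le2 a b ↔ ElemSub (fun _ φ => IsSigma2 φ) le1 le2 a b)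

/-- The strict part of `≤₁`. -/
def Lt1 (le1 : Ordinal → Ordinal → Prop) (a b : Ordinal) : Prop := le1 a b ∧ a ≠ b

/-- The strict part of `≤₂`. -/
def Lt2 (le2 : Ordinal → Ordinal → Prop) (a b : Ordinal) : Prop := le2 a b ∧ a ≠ b

/-- `1^∞`: the least ordinal `ν` such that below `ν` there are `<₂`-chains of every finite
length. -/
noncomputable def OneInfty (le2 : Ordinal → Ordinal → Prop) : Ordinal :=
  sInf {ν : Ordinal | ∀ n : ℕ, ∃ β : Fin n → Ordinal,
    (∀ i, β i < ν) ∧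
    ∀ (i : ℕ) (hi : i + 1 < n), Lt2 le2 (β ⟨i, Nat.lt_of_succ_lt hi⟩) (β ⟨i + 1, hi⟩)}

/-- A respecting forest of order 2: a finite structure with a linear order `≤₀` and partial
orders `≤₁`, `≤₂` which are forests, with `≤₂ ⊆ ≤₁ ⊆ ≤₀`, and `≤ᵢ₊₁` respecting `≤ᵢ`. -/
structure RForest where
  P : Type
  [fintypeP : Fintype P]
  le0 : P → P → Prop
  le1 : P → P → Prop
  le2 : P → P → Prop
  le0_refl : ∀ p, le0 p p
  le0_trans : ∀ p q r, le0 p q → le0 q r → le0 p r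
  le0_antisymm : ∀ p q, le0 p q → le0 q p → p = q
  le0_total : ∀ p q, le0 p q ∨ le0 q p
  le1_refl : ∀ p, le1 p p
  le1_trans : ∀ p q r, le1 p q → le1 q r → le1 p r
  le1_antisymm : ∀ p q, le1 p q → le1 q p → p = q
  le2_refl : ∀ p, le2 p p
  le2_trans : ∀ p q r, le2 p q → le2 q r → le2 p r
  le2_antisymm : ∀ p q, le2 p q → le2 q p → p = q
  le2_sub_le1 : ∀ p q, le2 p q → le1 p q
  le1_sub_le0 : ∀ p q, le1 p q → le0 p q
  forest1 : ∀ p q r, le1 q p → le1 r p → le1 q r ∨ le1 r q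
  forest2 : ∀ p q r, le2 q p → le2 r p → le2 q r ∨ le2 r q
  respects1 : ∀ p q r, le0 p q → le0 q r → le1 p r → le1 p q
  respects2 : ∀ p q r, le1 p q → le1 q r → le2 p r → le2 p q

attribute [instance] RForest.fintypeP

/-- The finite set `X` of ordinals, with the relations induced from `ℛ₂`, is isomorphic to the
respecting forest `F`. -/
def Realizes (le1 le2 : Ordinal → Ordinal → Prop) (F : RForest) (X : Finset Ordinal) : Prop :=
  ∃ e : F.P ≃ {x // x ∈ X}, ∀ p q : F.P,
    (F.le0 p q ↔ ((e p : Ordinal) ≤ (e q : Ordinal))) ∧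
    (F.le1 p q ↔ le1 (e p : Ordinal) (e q : Ordinal)) ∧
    (F.le2 p q ↔ le2 (e p : Ordinal) (e q : Ordinal))

/-- Pointwise comparison of two finite sets of ordinals via their increasing enumerations. -/
def pwLE (X Y : Finset Ordinal) : Prop :=
  ∃ h : X.card = Y.card, ∀ i : Fin X.card,
    ((X.orderIsoOfFin rfl i : {x // x ∈ X}) : Ordinal) ≤
      ((Y.orderIsoOfFin h.symm i : {x // x ∈ Y}) : Ordinal)

/-- `X` is the isominimal realization of the respecting forest `F` in `ℛ₂`: it is isomorphic
to `F` and pointwise minimal among all finite substructures of `ℛ₂` isomorphic to `F`. -/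
def IsIsominimalRealization (le1 le2 : Ordinal → Ordinal → Prop) (F : RForest)
    (X : Finset Ordinal) : Prop :=
  Realizes le1 le2 F X ∧ ∀ Y : Finset Ordinal, Realizes le1 le2 F Y → pwLE X Y

/-- A covering of the respecting forest `F` into `ℛ₂`. -/
def IsCovering (le1 le2 : Ordinal → Ordinal → Prop) (F : RForest)
    (c : F.P → Ordinal) : Prop :=
  (∀ p q, F.le0 p q ↔ c p ≤ c q) ∧
  (∀ p q, F.le1 p q → le1 (c p) (c q)) ∧
  (∀ p q, F.le2 p q → le2 (c p) (c q))


/-- A covering of the respecting forest `F` into the respecting forest `G`. -/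
def ForestCovering (F G : RForest) (f : F.P → G.P) : Prop :=
  (∀ p q, F.le0 p q ↔ G.le0 (f p) (f q)) ∧
  (∀ p q, F.le1 p q → G.le1 (f p) (f q)) ∧
  (∀ p q, F.le2 p q → G.le2 (f p) (f q))

/-!
The points of an isominimal realization form a pointwise minimal covering, and minimality is
contradicted by reflection. If `a ≤₁ b`, then the points of a finite set which lie in `[a, b)` can
be copied below `a` over the points already there, without changing the relations among the points
below `b`. The result is a smaller covering unless some connection of the covering crosses `b`,
that is, leads from a point in `[a, b)` to a point which is `≥ b`. If `a ≤₂ b`, then reflection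
moreover provides lifts back to `b`, and with them `≤₁`-connections to `b` turn into
`≤₁`-connections to `a`; so only the `≤₂`-connections that cross `b` are an obstacle. Hence, along
a connection from a point of the covering to any ordinal `γ`, crossing connections lead from that
point to a point `≥ γ`. This yields tightness, and also that minimal coverings are realizations,
whence isominimal realizations are minimal among all coverings.
-/

section R2

open FirstOrder.Language Set

section FormulaClasses

variable {L : Language} {α β : Type} {n : ℕ}

theorem isQF_toFormula {φ : L.BoundedFormula α n} (hφ : φ.IsQF) : φ.toFormula.IsQF := by
  induction hφ with
  | falsum => exact .falsum
  | of_isAtomic hat =>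
    cases hat with
    | equal => exact (BoundedFormula.IsAtomic.equal _ _).isQF
    | rel => exact (BoundedFormula.IsAtomic.rel _ _).isQF
  | imp _ _ ih₁ ih₂ => exact ih₁.imp ih₂

theorem isQF_iInf [Finite β] {f : β → L.BoundedFormula α n} (hf : ∀ b, (f b).IsQF) :
    (BoundedFormula.iInf f).IsQF := by
  simp only [BoundedFormula.iInf]
  induction Finset.toList (α := β) _ with
  | nil => exact .top
  | cons b l ih => exact (hf b).inf ih

theorem isQF_iSup [Finite β] {f : β → L.BoundedFormula α n} (hf : ∀ b, (f b).IsQF) :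
    (BoundedFormula.iSup f).IsQF := by
  simp only [BoundedFormula.iSup]
  induction Finset.toList (α := β) _ with
  | nil => exact BoundedFormula.isQF_bot
  | cons b l ih => exact (hf b).sup ih

namespace IsSigma1

theorem isExistential {φ : L.BoundedFormula α n} (hφ : IsSigma1 φ) : φ.IsExistential := by
  induction hφ with
  | of_isQF h => exact h.isExistential
  | ex _ ih => exact ih.ex

theorem realize_embedding {M N : Type*} [L.Structure M] [L.Structure N] {φ : L.Formula α}
    (hφ : IsSigma1 φ) (f : M ↪[L] N) {v : α → M} (hv : φ.Realize v) : φ.Realize (f ∘ v) := by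
  simpa only [Formula.Realize, Unique.eq_default] using hφ.isExistential.realize_embedding f hv

theorem isSigma2 {φ : L.BoundedFormula α n} (hφ : IsSigma1 φ) : IsSigma2 φ := by
  induction hφ with
  | of_isQF h => exact .of_isPi1 (.of_isQF h)
  | ex _ ih => exact ih.ex

theorem relabel {m : ℕ} {φ : L.BoundedFormula α n} (hφ : IsSigma1 φ) (g : α → β ⊕ Fin m) :
    IsSigma1 (φ.relabel g) := by
  induction hφ with
  | of_isQF h => exact .of_isQF (h.relabel g)
  | ex _ ih => rw [BoundedFormula.relabel_ex]; exact ih.ex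

theorem exs : ∀ {n : ℕ} {φ : L.BoundedFormula α n}, IsSigma1 φ → IsSigma1 φ.exs
  | 0, _, hφ => hφ
  | _ + 1, φ, hφ => exs (φ := φ.ex) hφ.ex

theorem iExs [Finite β] {φ : L.Formula (α ⊕ β)} (hφ : IsSigma1 φ) : IsSigma1 (φ.iExs β) :=
  (hφ.relabel _).exs

theorem toFormula {φ : L.BoundedFormula α n} (hφ : IsSigma1 φ) : IsSigma1 φ.toFormula := by
  induction hφ with
  | of_isQF h => exact .of_isQF (isQF_toFormula h)
  | ex _ ih => exact .ex (ih.relabel _)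

end IsSigma1

namespace IsPi1

theorem relabel {m : ℕ} {φ : L.BoundedFormula α n} (hφ : IsPi1 φ) (g : α → β ⊕ Fin m) :
    IsPi1 (φ.relabel g) := by
  induction hφ with
  | of_isQF h => exact .of_isQF (h.relabel g)
  | all _ ih => rw [BoundedFormula.relabel_all]; exact ih.all

theorem alls : ∀ {n : ℕ} {φ : L.BoundedFormula α n}, IsPi1 φ → IsPi1 φ.alls
  | 0, _, hφ => hφ
  | _ + 1, φ, hφ => alls (φ := φ.all) hφ.all

theorem iAlls [Finite β] {φ : L.Formula (α ⊕ β)} (hφ : IsPi1 φ) : IsPi1 (φ.iAlls β) :=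
  (hφ.relabel _).alls

theorem exists_isSigma1_realize_iff_not {φ : L.BoundedFormula α n} (hφ : IsPi1 φ) :
    ∃ ψ : L.BoundedFormula α n, IsSigma1 ψ ∧
      ∀ (M : Type*) [L.Structure M] (v : α → M) (xs : Fin n → M),
        ψ.Realize v xs ↔ ¬ φ.Realize v xs := by
  induction hφ with
  | @of_isQF _ φ h => exact ⟨φ.not, .of_isQF h.not, fun M _ v xs => BoundedFormula.realize_not⟩
  | all _ ih =>
    obtain ⟨ψ, hψ, hψφ⟩ := ih
    exact ⟨ψ.ex, hψ.ex, fun M _ v xs => by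
      simp only [BoundedFormula.realize_ex, BoundedFormula.realize_all, hψφ, not_forall]⟩

end IsPi1

namespace IsSigma2

theorem relabel {m : ℕ} {φ : L.BoundedFormula α n} (hφ : IsSigma2 φ) (g : α → β ⊕ Fin m) :
    IsSigma2 (φ.relabel g) := by
  induction hφ with
  | of_isPi1 h => exact .of_isPi1 (h.relabel g)
  | ex _ ih => rw [BoundedFormula.relabel_ex]; exact ih.ex

theorem exs : ∀ {n : ℕ} {φ : L.BoundedFormula α n}, IsSigma2 φ → IsSigma2 φ.exs
  | 0, _, hφ => hφ
  | _ + 1, φ, hφ => exs (φ := φ.ex) hφ.ex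

theorem iExs [Finite β] {φ : L.Formula (α ⊕ β)} (hφ : IsSigma2 φ) : IsSigma2 (φ.iExs β) :=
  (hφ.relabel _).exs

end IsSigma2

end FormulaClasses

theorem exists_isQF_realize_iff_mem {L : Language} {α ι : Type} [Finite ι] {ψ : ι → L.Formula α}
    (hψ : ∀ i, (ψ i).IsQF) (T : Set (ι → Prop)) :
    ∃ φ : L.Formula α, φ.IsQF ∧ ∀ (M : Type*) [L.Structure M] (v : α → M),
      φ.Realize v ↔ (fun i => (ψ i).Realize v) ∈ T := by
  classical
  let lit (t : ι → Prop) (i : ι) : L.Formula α := if t i then ψ i else (ψ i).not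
  have isQF_lit (t : ι → Prop) (i : ι) : (lit t i).IsQF := by
    unfold lit; split_ifs
    exacts [hψ i, (hψ i).not]
  refine ⟨.iSup fun t : T => .iInf fun i => lit t i,
    isQF_iSup fun t => isQF_iInf (isQF_lit t), fun M _ v => ?_⟩
  have realize_lit (t : ι → Prop) (i : ι) : (lit t i).Realize v ↔ ((ψ i).Realize v ↔ t i) := by
    unfold lit; split_ifs with ht <;> simp [ht]
  simp only [Formula.realize_iSup, Formula.realize_iInf, realize_lit]
  refine ⟨fun ⟨t, ht⟩ => ?_, fun hT => ⟨⟨_, hT⟩, fun i => Iff.rfl⟩⟩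
  rw [funext fun i => propext (ht i)]
  exact t.2

universe u

variable {le1 le2 : Ordinal.{u} → Ordinal.{u} → Prop} {κ κ₁ κ₂ κ₃ : Type} {a b c : Ordinal.{u}}

/-- The truth values of the three relations of `ℛ₂` at all pairs of entries of a tuple of ordinals.
Tuples with the same diagram satisfy the same quantifier-free formulas. -/
def diagram (le1 le2 : Ordinal.{u} → Ordinal.{u} → Prop) (f : κ → Ordinal.{u}) (i j : κ) :
    Prop × Prop × Prop :=
  (f i ≤ f j, le1 (f i) (f j), le2 (f i) (f j))

/-- The segment of ordinals below `β`, as a type carrying the `ordLang`-structure `segStr`. -/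
def Seg (_le1 _le2 : Ordinal.{u} → Ordinal.{u} → Prop) (β : Ordinal.{u}) : Type (u + 1) :=
  {x : Ordinal.{u} // x < β}

namespace Seg

instance : ordLang.Structure (Seg le1 le2 b) := segStr le1 le2 b

/-- The ordinal underlying an element of a segment. -/
def val (x : Seg le1 le2 b) : Ordinal.{u} := Subtype.val x

theorem val_lt (x : Seg le1 le2 b) : x.val < b := x.2

/-- The inclusion of a segment into a longer one, as an embedding of structures. -/
def inclusion (le1 le2 : Ordinal.{u} → Ordinal.{u} → Prop) (hab : a ≤ b) :
    Seg le1 le2 a ↪[ordLang] Seg le1 le2 b where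
  toFun x := (⟨x.val, x.val_lt.trans_le hab⟩ : {x // x < b})
  inj' x y hxy := Subtype.ext (Subtype.mk.inj hxy)
  map_fun' f := f.elim
  map_rel' R v := by cases R <;> rfl

end Seg

theorem exists_isQF_realize_iff_diagram_mem [Finite κ] (T : Set (κ → κ → Prop × Prop × Prop)) :
    ∃ φ : ordLang.Formula κ, φ.IsQF ∧
      ∀ (le1 le2 : Ordinal.{u} → Ordinal.{u} → Prop) (b : Ordinal.{u}) (v : κ → Seg le1 le2 b),
        φ.Realize v ↔ diagram le1 le2 (Seg.val ∘ v) ∈ T := by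
  let rel : Fin 3 → ordLang.Relations 2 := ![.le, .le1, .le2]
  let ψ (p : κ × κ × Fin 3) : ordLang.Formula κ := (rel p.2.2).formula₂ (.var p.1) (.var p.2.1)
  have isQF_ψ (p : κ × κ × Fin 3) : (ψ p).IsQF := (BoundedFormula.IsAtomic.rel _ _).isQF
  obtain ⟨φ, hφ, hφT⟩ := exists_isQF_realize_iff_mem isQF_ψ
    {t | (fun i j => (t (i, j, 0), t (i, j, 1), t (i, j, 2))) ∈ T}
  refine ⟨φ, hφ, fun le1 le2 b v => ?_⟩
  rw [hφT]
  simp only [ψ, Formula.realize_rel₂]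
  rfl

/-- `Σ₁`-elementarity between segments, which is how `IsR2Pair` characterizes `≤₁`; it is stated for
arbitrary relations `le1`, `le2`. -/
abbrev ElemSub₁ (le1 le2 : Ordinal.{u} → Ordinal.{u} → Prop) (a b : Ordinal.{u}) : Prop :=
  ElemSub (fun _ φ => IsSigma1 φ) le1 le2 a b

/-- `Σ₂`-elementarity between segments, which is how `IsR2Pair` characterizes `≤₂`; it is stated for
arbitrary relations `le1`, `le2`. -/
abbrev ElemSub₂ (le1 le2 : Ordinal.{u} → Ordinal.{u} → Prop) (a b : Ordinal.{u}) : Prop :=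
  ElemSub (fun _ φ => IsSigma2 φ) le1 le2 a b

theorem elemSub_iff {C : ∀ k : ℕ, ordLang.Formula (Fin k) → Prop} :
    ElemSub C le1 le2 a b ↔ ∃ hab : a ≤ b, ∀ (k : ℕ) (φ : ordLang.Formula (Fin k)), C k φ →
      ∀ v : Fin k → Seg le1 le2 a, φ.Realize v ↔ φ.Realize (Seg.inclusion le1 le2 hab ∘ v) :=
  Iff.rfl

namespace ElemSub

variable {C D : ∀ k : ℕ, ordLang.Formula (Fin k) → Prop}

theorem le (h : ElemSub C le1 le2 a b) : a ≤ b := h.1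

theorem trans (hab : ElemSub C le1 le2 a b) (hbc : ElemSub C le1 le2 b c) :
    ElemSub C le1 le2 a c :=
  ⟨hab.le.trans hbc.le, fun k φ hφ v => (hab.2 k φ hφ v).trans (hbc.2 k φ hφ _)⟩

theorem mono (h : ElemSub D le1 le2 a b) (hCD : ∀ k φ, C k φ → D k φ) :
    ElemSub C le1 le2 a b :=
  ⟨h.le, fun k φ hφ => h.2 k φ (hCD k φ hφ)⟩

theorem realize_iff {C : ∀ κ : Type, ordLang.Formula κ → Prop}
    (hC : ∀ (κ κ' : Type) (φ : ordLang.Formula κ) (g : κ → κ'), C κ φ → C κ' (φ.relabel g))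
    (h : ElemSub (fun k => C (Fin k)) le1 le2 a b) [Finite κ] {φ : ordLang.Formula κ}
    (hφ : C κ φ) (v : κ → Seg le1 le2 a) :
    φ.Realize v ↔ φ.Realize (Seg.inclusion le1 le2 h.le ∘ v) := by
  obtain ⟨k, ⟨e⟩⟩ := Finite.exists_equiv_fin κ
  obtain ⟨_, hab⟩ := elemSub_iff.1 h
  have := hab k _ (hC κ (Fin k) φ e hφ) (v ∘ e.symm)
  simpa only [Formula.realize_relabel, Function.comp_assoc, Equiv.symm_comp_self,
    Function.comp_id] using this

end ElemSub

namespace ElemSub₁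

theorem realize_iff (h : ElemSub₁ le1 le2 a b) [Finite κ] {φ : ordLang.Formula κ}
    (hφ : IsSigma1 φ) (v : κ → Seg le1 le2 a) :
    φ.Realize v ↔ φ.Realize (Seg.inclusion le1 le2 h.le ∘ v) :=
  ElemSub.realize_iff (C := fun _ φ => IsSigma1 φ) (fun _ _ _ _ hφ => hφ.relabel _) h hφ v

theorem realize_boundedFormula_iff (h : ElemSub₁ le1 le2 a b) [Finite κ] {n : ℕ}
    {φ : ordLang.BoundedFormula κ n} (hφ : IsSigma1 φ) (v : κ → Seg le1 le2 a)
    (xs : Fin n → Seg le1 le2 a) :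
    φ.Realize v xs ↔
      φ.Realize (Seg.inclusion le1 le2 h.le ∘ v) (Seg.inclusion le1 le2 h.le ∘ xs) := by
  have := h.realize_iff hφ.toFormula (Sum.elim v xs)
  simpa only [BoundedFormula.realize_toFormula, Function.comp_assoc, Sum.elim_comp_inl,
    Sum.elim_comp_inr] using this

theorem of_le_of_le (hac : ElemSub₁ le1 le2 a c) (hab : a ≤ b) (hbc : b ≤ c) :
    ElemSub₁ le1 le2 a b := by
  refine elemSub_iff.2 ⟨hab, fun k φ hφ v => ⟨fun hv => ?_, fun hv => ?_⟩⟩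
  · exact hφ.realize_embedding _ hv
  · exact (hac.realize_iff hφ v).2 (hφ.realize_embedding (Seg.inclusion le1 le2 hbc) hv)

theorem exists_reflection [Finite κ₁] [Finite κ₂] (h : ElemSub₁ le1 le2 a b)
    {v : κ₁ → Ordinal.{u}} (hv : ∀ i, v i < a) {x : κ₂ → Ordinal.{u}} (hx : ∀ i, x i < b) :
    ∃ x' : κ₂ → Ordinal.{u}, (∀ i, x' i < a) ∧
      diagram le1 le2 (Sum.elim v x') = diagram le1 le2 (Sum.elim v x) := by
  obtain ⟨φ, hφ, hφT⟩ := exists_isQF_realize_iff_diagram_mem.{u}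
    {diagram le1 le2 (Sum.elim v x)}
  let w : κ₁ → Seg le1 le2 a := fun i => ⟨v i, hv i⟩
  let y : κ₂ → Seg le1 le2 b := fun i => ⟨x i, hx i⟩
  have hb : (φ.iExs κ₂).Realize (Seg.inclusion le1 le2 h.le ∘ w) := by
    exact Formula.realize_iExs.2
      ⟨y, (hφT ..).2 (congrArg _ (funext (by rintro (_ | _) <;> rfl)))⟩
  obtain ⟨y', hy'⟩ := Formula.realize_iExs.1 ((h.realize_iff (IsSigma1.of_isQF hφ).iExs w).2 hb)
  exact ⟨Seg.val ∘ y', fun i => (y' i).val_lt,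
    Eq.trans (congrArg _ (funext (by rintro (_ | _) <;> rfl))) ((hφT ..).1 hy')⟩

end ElemSub₁

theorem IsSigma2.realize_of_elemSub₁ [Finite κ] {n : ℕ} {φ : ordLang.BoundedFormula κ n}
    (hφ : IsSigma2 φ) (h : ElemSub₁ le1 le2 a b) {v : κ → Seg le1 le2 a}
    {xs : Fin n → Seg le1 le2 a} (hv : φ.Realize v xs) :
    φ.Realize (Seg.inclusion le1 le2 h.le ∘ v) (Seg.inclusion le1 le2 h.le ∘ xs) := by
  induction hφ with
  | of_isPi1 hφ =>
    obtain ⟨ψ, hψ, hψφ⟩ := hφ.exists_isSigma1_realize_iff_not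
    contrapose! hv
    rw [← hψφ] at hv ⊢
    exact (h.realize_boundedFormula_iff hψ v xs).2 hv
  | ex _ ih =>
    rw [BoundedFormula.realize_ex] at hv ⊢
    obtain ⟨x, hx⟩ := hv
    exact ⟨_, by simpa only [Fin.comp_snoc] using ih hx⟩

theorem IsSigma2.realize_inclusion [Finite κ] {φ : ordLang.Formula κ} (hφ : IsSigma2 φ)
    (h : ElemSub₁ le1 le2 a b) {v : κ → Seg le1 le2 a} (hv : φ.Realize v) :
    φ.Realize (Seg.inclusion le1 le2 h.le ∘ v) := by
  simpa only [Formula.Realize, Unique.eq_default] using hφ.realize_of_elemSub₁ h hv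

namespace ElemSub₂

theorem elemSub₁ (h : ElemSub₂ le1 le2 a b) : ElemSub₁ le1 le2 a b :=
  h.mono fun _ _ hφ => hφ.isSigma2

theorem realize_iff (h : ElemSub₂ le1 le2 a b) [Finite κ] {φ : ordLang.Formula κ}
    (hφ : IsSigma2 φ) (v : κ → Seg le1 le2 a) :
    φ.Realize v ↔ φ.Realize (Seg.inclusion le1 le2 h.le ∘ v) :=
  ElemSub.realize_iff (C := fun _ φ => IsSigma2 φ) (fun _ _ _ _ hφ => hφ.relabel _) h hφ v

theorem of_elemSub₁ (hac : ElemSub₂ le1 le2 a c) (hab : ElemSub₁ le1 le2 a b)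
    (hbc : ElemSub₁ le1 le2 b c) : ElemSub₂ le1 le2 a b := by
  refine elemSub_iff.2 ⟨hab.le, fun k φ hφ v => ⟨fun hv => ?_, fun hv => ?_⟩⟩
  · exact hφ.realize_inclusion hab hv
  · exact (hac.realize_iff hφ v).2 (hφ.realize_inclusion hbc hv)

theorem exists_reflection [Finite κ₁] [Finite κ₂] [Finite κ₃] (h : ElemSub₂ le1 le2 a b)
    {v : κ₁ → Ordinal.{u}} (hv : ∀ i, v i < a) {x : κ₂ → Ordinal.{u}} (hx : ∀ i, x i < b) :
    ∃ x' : κ₂ → Ordinal.{u}, (∀ i, x' i < a) ∧ ∀ z : κ₃ → Ordinal.{u}, (∀ i, z i < a) →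
      ∃ z' : κ₃ → Ordinal.{u}, (∀ i, z' i < b) ∧
        diagram le1 le2 (Sum.elim (Sum.elim v x) z') =
          diagram le1 le2 (Sum.elim (Sum.elim v x') z) := by
  obtain ⟨φ, hφ, hφT⟩ := exists_isQF_realize_iff_diagram_mem.{u}
    {d | ∃ z' : κ₃ → Ordinal.{u}, (∀ i, z' i < b) ∧
      diagram le1 le2 (Sum.elim (Sum.elim v x) z') = d}
  let w : κ₁ → Seg le1 le2 a := fun i => ⟨v i, hv i⟩
  let y : κ₂ → Seg le1 le2 b := fun i => ⟨x i, hx i⟩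
  have hb : ((φ.iAlls κ₃).iExs κ₂).Realize (Seg.inclusion le1 le2 h.le ∘ w) := by
    refine Formula.realize_iExs.2 ⟨y, Formula.realize_iAlls.2 fun z => (hφT ..).2 ?_⟩
    exact ⟨Seg.val ∘ z, fun i => (z i).val_lt,
      congrArg _ (funext (by rintro ((_ | _) | _) <;> rfl))⟩
  obtain ⟨y', hy'⟩ := Formula.realize_iExs.1
    ((h.realize_iff (IsSigma2.of_isPi1 (IsPi1.of_isQF hφ).iAlls).iExs w).2 hb)
  refine ⟨Seg.val ∘ y', fun i => (y' i).val_lt, fun z hz => ?_⟩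
  obtain ⟨z', hz', hdiag⟩ := (hφT ..).1 (Formula.realize_iAlls.1 hy' fun i => ⟨z i, hz i⟩)
  exact ⟨z', hz', hdiag.trans (congrArg _ (funext (by rintro ((_ | _) | _) <;> rfl)))⟩

end ElemSub₂

section Collapse

variable {κ' : Type} {f g : κ → Ordinal.{u}} {f' : κ' → Ordinal.{u}} {s : Ordinal.{u}}

theorem diagram_eq_iff {i j : κ} {i' j' : κ'} :
    diagram le1 le2 f i j = diagram le1 le2 f' i' j' ↔ (f i ≤ f j ↔ f' i' ≤ f' j') ∧
      (le1 (f i) (f j) ↔ le1 (f' i') (f' j')) ∧ (le2 (f i) (f j) ↔ le2 (f' i') (f' j')) := by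
  simp only [diagram, Prod.mk.injEq, eq_iff_iff]

theorem eq_of_diagram_eq {i j : κ} {i' j' : κ'}
    (hij : diagram le1 le2 f i j = diagram le1 le2 f' i' j')
    (hji : diagram le1 le2 f j i = diagram le1 le2 f' j' i') (heq : f' i' = f' j') : f i = f j :=
  le_antisymm ((diagram_eq_iff.1 hij).1.2 heq.le) ((diagram_eq_iff.1 hji).1.2 heq.ge)

/-- `g` moves the entries of `f` lying in `[a, b)` below `a` and fixes all others: the shape of the
tuples that reflection produces. -/
structure IsCollapse (a b : Ordinal.{u}) (f g : κ → Ordinal.{u}) : Prop where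
  eq_of_lt : ∀ i, f i < a → g i = f i
  lt_of_lt : ∀ i, f i < b → g i < a
  eq_of_le : ∀ i, b ≤ f i → g i = f i

/-- A collapse `g` of `f` such that every continuation `z` of the collapsed part of `g` can be
lifted back over `f`: the entries of `z` below `a` are moved below `b` without changing their
diagram. -/
structure IsLiftableCollapse (le1 le2 : Ordinal.{u} → Ordinal.{u} → Prop) (a b : Ordinal.{u})
    (f g : κ → Ordinal.{u}) : Prop extends IsCollapse a b f g where
  exists_lift : ∀ z : κ → Ordinal.{u}, (∀ i, f i < b → z i = g i) →
    ∃ z' : κ → Ordinal.{u}, (∀ i, f i < b → z' i = f i) ∧ (∀ i, z i < a → z' i < b) ∧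
      (∀ i, a ≤ z i → z' i = z i) ∧
      ∀ i j, z i < a → z j < a → diagram le1 le2 z' i j = diagram le1 le2 z i j

theorem IsCollapse.le (h : IsCollapse a b f g) (i : κ) : g i ≤ f i := by
  rcases lt_or_ge (f i) a with hi | hi
  · exact (h.eq_of_lt i hi).le
  rcases lt_or_ge (f i) b with hi' | hi'
  · exact (h.lt_of_lt i hi').le.trans hi
  · exact (h.eq_of_le i hi').le

theorem IsLiftableCollapse.diagram_eq (h : IsLiftableCollapse le1 le2 a b f g) {i j : κ}
    (hi : f i < b) (hj : f j < b) : diagram le1 le2 g i j = diagram le1 le2 f i j := by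
  obtain ⟨f', hf', -, -, hdiag⟩ := h.exists_lift g fun _ _ => rfl
  rw [← hdiag i j (h.lt_of_lt i hi) (h.lt_of_lt j hj)]
  simp only [diagram, hf' i hi, hf' j hj]

theorem ElemSub₁.exists_isCollapse [Finite κ] (h : ElemSub₁ le1 le2 a b) (f : κ → Ordinal.{u}) :
    ∃ g : κ → Ordinal.{u}, IsCollapse a b f g ∧
      ∀ i j, f i < b → f j < b → diagram le1 le2 g i j = diagram le1 le2 f i j := by
  classical
  obtain ⟨x, hxa, hx⟩ := h.exists_reflection (v := fun i : {i // f i < a} => f i) (fun i => i.2)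
    (x := fun i : {i // f i < b} => f i) (fun i => i.2)
  let g : κ → Ordinal.{u} := fun i => if hi : f i < b then x ⟨i, hi⟩ else f i
  have g_eq {i : κ} (hi : f i < b) : g i = x ⟨i, hi⟩ := dif_pos hi
  refine ⟨g, ⟨fun i hi => ?_, fun i hi => ?_, fun i hi => dif_neg hi.not_gt⟩, fun i j hi hj => ?_⟩
  · have hib := hi.trans_le h.le
    rw [g_eq hib]
    exact eq_of_diagram_eq (congrFun₂ hx (.inr ⟨i, hib⟩) (.inl ⟨i, hi⟩)) (congrFun₂ hx _ _) rfl
  · exact g_eq hi ▸ hxa _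
  · simp only [diagram, g_eq hi, g_eq hj]
    exact congrFun₂ hx (.inr ⟨i, hi⟩) (.inr ⟨j, hj⟩)

theorem exists_lift_of_forall_lt {p p' : κ' → Ordinal.{u}}
    (hlift : ∀ z : κ → Ordinal.{u}, (∀ i, z i < a) → ∃ z' : κ → Ordinal.{u}, (∀ i, z' i < b) ∧
      diagram le1 le2 (Sum.elim p z') = diagram le1 le2 (Sum.elim p' z)) (z : κ → Ordinal.{u}) :
    ∃ z' : κ → Ordinal.{u}, (∀ i, z i < a → z' i < b) ∧ (∀ i, a ≤ z i → z' i = z i) ∧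
      ∀ k l, Sum.elim p' z k < a → Sum.elim p' z l < a →
        diagram le1 le2 (Sum.elim p z') k l = diagram le1 le2 (Sum.elim p' z) k l := by
  classical
  rcases eq_or_ne a 0 with rfl | ha
  · exact ⟨z, fun i hi => (not_lt_zero hi).elim, fun _ _ => rfl,
      fun k _ hk => (not_lt_zero hk).elim⟩
  let w : κ → Ordinal.{u} := fun i => if z i < a then z i else 0
  obtain ⟨w', hw'b, hw'⟩ := hlift w fun i => by
    unfold w; split_ifs with hi
    exacts [hi, pos_iff_ne_zero.2 ha]
  let z' : κ → Ordinal.{u} := fun i => if z i < a then w' i else z i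
  have elim_eq (k : κ' ⊕ κ) (hk : Sum.elim p' z k < a) :
      Sum.elim p z' k = Sum.elim p w' k ∧ Sum.elim p' z k = Sum.elim p' w k := by
    rcases k with k | k
    exacts [⟨rfl, rfl⟩, ⟨if_pos hk, (if_pos hk).symm⟩]
  refine ⟨z', fun i hi => (elim_eq (.inr i) hi).1.trans_lt (hw'b i), fun i hi => if_neg hi.not_gt,
    fun k l hk hl => ?_⟩
  simp only [diagram, elim_eq k hk, elim_eq l hl]
  exact congrFun₂ hw' k l

theorem ElemSub₂.exists_isLiftableCollapse [Finite κ] (h : ElemSub₂ le1 le2 a b)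
    (f : κ → Ordinal.{u}) : ∃ g : κ → Ordinal.{u}, IsLiftableCollapse le1 le2 a b f g := by
  classical
  obtain ⟨x, hxa, hx⟩ := h.exists_reflection (κ₃ := κ)
    (v := fun i : {i // f i < a} => f i) (fun i => i.2)
    (x := fun i : {i // f i < b} => f i) (fun i => i.2)
  let g : κ → Ordinal.{u} := fun i => if hi : f i < b then x ⟨i, hi⟩ else f i
  have g_eq {i : κ} (hi : f i < b) : g i = x ⟨i, hi⟩ := dif_pos hi
  have g_lt {i : κ} (hi : f i < b) : g i < a := g_eq hi ▸ hxa _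
  refine ⟨g, ⟨fun i hi => ?_, fun i => g_lt, fun i hi => dif_neg hi.not_gt⟩, fun z hz => ?_⟩
  · have hib := hi.trans_le h.le
    obtain ⟨z', -, hz'⟩ := hx (fun _ => f i) fun _ => hi
    rw [g_eq hib]
    exact eq_of_diagram_eq (congrFun₂ hz'.symm (.inl (.inr ⟨i, hib⟩)) (.inl (.inl ⟨i, hi⟩)))
      (congrFun₂ hz'.symm _ _) rfl
  · obtain ⟨z', hz'b, hz'a, hz'⟩ := exists_lift_of_forall_lt hx z
    refine ⟨z', fun i hi => ?_, hz'b, hz'a, fun i j => hz' (.inr i) (.inr j)⟩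
    have hzi : z i = x ⟨i, hi⟩ := (hz i hi).trans (g_eq hi)
    have hza : z i < a := hzi ▸ hxa _
    exact eq_of_diagram_eq (hz' (.inr i) (.inl (.inr ⟨i, hi⟩)) hza (hxa _))
      (hz' _ _ (hxa _) hza) hzi

namespace IsR2Pair

variable (h : IsR2Pair le1 le2)
include h

theorem elemSub₁ (hab : le1 a b) : ElemSub₁ le1 le2 a b := (h.1 a b).1 hab

theorem elemSub₂ (hab : le2 a b) : ElemSub₂ le1 le2 a b := (h.2 a b).1 hab

theorem le_of_le1 (hab : le1 a b) : a ≤ b := (h.elemSub₁ hab).le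

theorem le1_of_le2 (hab : le2 a b) : le1 a b := (h.1 a b).2 (h.elemSub₂ hab).elemSub₁

theorem le1_trans (hab : le1 a b) (hbc : le1 b c) : le1 a c :=
  (h.1 a c).2 ((h.elemSub₁ hab).trans (h.elemSub₁ hbc))

theorem le1_of_le1_of_le (hac : le1 a c) (hab : a ≤ b) (hbc : b ≤ c) : le1 a b :=
  (h.1 a b).2 ((h.elemSub₁ hac).of_le_of_le hab hbc)

theorem le2_of_le2_of_le1 (hac : le2 a c) (hab : le1 a b) (hbc : le1 b c) : le2 a b :=
  (h.2 a b).2 ((h.elemSub₂ hac).of_elemSub₁ (h.elemSub₁ hab) (h.elemSub₁ hbc))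

-- Otherwise `a` witnesses in the segment below `b` that some point above `s` is not above it in
-- the sense of `≤₁`, and this reflects below `a`.
theorem le1_of_forall_lt (hab : le1 a b) (hlt : a < b) (hsa : s < a)
    (hs : ∀ z, s ≤ z → z < a → le1 s z) : le1 s a := by
  obtain ⟨z, hza, hz⟩ := (h.elemSub₁ hab).exists_reflection
    (v := fun _ : Unit => s) (fun _ => hsa) (x := fun _ : Unit => a) (fun _ => hlt)
  obtain ⟨hle, hle1, -⟩ := diagram_eq_iff.1 (congrFun₂ hz (.inl ()) (.inr ()))
  exact hle1.1 (hs _ (hle.2 hsa.le) (hza ()))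

theorem exists_isLiftableCollapse [Finite κ] (hab : le2 a b) (hlt : a < b) (f : κ → Ordinal.{u}) :
    ∃ g : κ → Ordinal.{u}, IsLiftableCollapse le1 le2 a b f g ∧
      ∀ i, f i < b → le1 (f i) b → le1 (g i) a := by
  obtain ⟨G, hG⟩ := (h.elemSub₂ hab).exists_isLiftableCollapse
    (fun i : Option κ => i.elim b f)
  refine ⟨fun i => G (some i), ⟨⟨fun i => hG.eq_of_lt (some i), fun i => hG.lt_of_lt (some i),
    fun i => hG.eq_of_le (some i)⟩, fun z hz => ?_⟩, fun i hi hib => ?_⟩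
  · obtain ⟨z', hz'⟩ := hG.exists_lift (fun i => i.elim b z) fun
      | none, hb => (lt_irrefl b hb).elim
      | some i, hi => hz i hi
    exact ⟨fun i => z' (some i), fun i => hz'.1 (some i), fun i => hz'.2.1 (some i),
      fun i => hz'.2.2.1 (some i), fun i j => hz'.2.2.2 (some i) (some j)⟩
  · have hGi := hG.lt_of_lt (some i) hi
    refine h.le1_of_forall_lt (h.le1_of_le2 hab) hlt hGi fun z hz hza => ?_
    obtain ⟨z', hz'f, hz'b, -, hz'⟩ := hG.exists_lift (fun j => j.elim z (G ∘ some)) fun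
      | none, hb => (lt_irrefl b hb).elim
      | some _, _ => rfl
    obtain ⟨hle, hle1, -⟩ := diagram_eq_iff.1 (hz' (some i) none hGi hza)
    rw [hz'f (some i) hi] at hle hle1
    exact hle1.1 (h.le1_of_le1_of_le hib (hle.2 hz) (hz'b none hza).le)

end IsR2Pair

end Collapse

section MinimalCovering

variable {F : RForest} {g : F.P → Ordinal.{u}} {cov : F.P → Ordinal.{u}} {p r s : F.P}

/-- The conditions that `IsCovering` imposes on the values at a single pair of points. -/
def CoversAt (le1 le2 : Ordinal.{u} → Ordinal.{u} → Prop) (F : RForest) (cov : F.P → Ordinal.{u})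
    (r s : F.P) : Prop :=
  (F.le0 r s ↔ cov r ≤ cov s) ∧ (F.le1 r s → le1 (cov r) (cov s)) ∧
    (F.le2 r s → le2 (cov r) (cov s))

theorem isCovering_iff_forall_coversAt :
    IsCovering le1 le2 F cov ↔ ∀ r s, CoversAt le1 le2 F cov r s := by
  simp only [IsCovering, CoversAt, forall_and]

theorem CoversAt.of_diagram_eq (hg : CoversAt le1 le2 F g r s)
    (h : diagram le1 le2 cov r s = diagram le1 le2 g r s) : CoversAt le1 le2 F cov r s := by
  obtain ⟨h0, h1, h2⟩ := diagram_eq_iff.1 h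
  exact ⟨hg.1.trans h0.symm, h1.2 ∘ hg.2.1, h2.2 ∘ hg.2.2⟩

-- Pairs of points on one side of `[a, b)` stay in place relative to each other, so only the pairs
-- below `b` and those crossing from `[a, b)` to the points above need attention.
theorem IsCollapse.coversAt (hg : IsCollapse a b cov g) (hab : a ≤ b)
    (hcov : CoversAt le1 le2 F cov r s)
    (hbelow : cov r < b → cov s < b → CoversAt le1 le2 F g r s)
    (hcross : cov r ∈ Ico a b → b ≤ cov s →
      (F.le1 r s → le1 (g r) (cov s)) ∧ (F.le2 r s → le2 (g r) (cov s))) :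
    CoversAt le1 le2 F g r s := by
  rcases lt_or_ge (cov s) b with hsb | hsb <;> rcases lt_or_ge (cov r) b with hrb | hrb
  · exact hbelow hrb hsb
  · have not_le0 : ¬ F.le0 r s := fun hrs => (hcov.1.1 hrs).not_gt (hsb.trans_le hrb)
    have hlt : g s < g r := by
      rw [hg.eq_of_le r hrb]
      exact (hg.lt_of_lt s hsb).trans_le (hab.trans hrb)
    exact ⟨iff_of_false not_le0 hlt.not_ge, fun hrs => (not_le0 (F.le1_sub_le0 _ _ hrs)).elim,
      fun hrs => (not_le0 (F.le1_sub_le0 _ _ (F.le2_sub_le1 _ _ hrs))).elim⟩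
  · rw [CoversAt, hg.eq_of_le s hsb]
    rcases lt_or_ge (cov r) a with hra | hra
    · rwa [hg.eq_of_lt r hra]
    · have hle : g r ≤ cov s := ((hg.lt_of_lt r hrb).trans_le (hab.trans hsb)).le
      exact ⟨iff_of_true (hcov.1.2 (hrb.le.trans hsb)) hle, hcross ⟨hra, hrb⟩ hsb⟩
  · rwa [CoversAt, hg.eq_of_le s hsb, hg.eq_of_le r hrb]

theorem IsCollapse.not_isCovering_of_minimal (hg : IsCollapse a b cov g)
    (hmin : Minimal (IsCovering le1 le2 F) cov) (hp : cov p ∈ Ico a b) :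
    ¬ IsCovering le1 le2 F g := fun hcov =>
  (hmin.2 hcov hg.le p).not_gt ((hg.lt_of_lt p hp.2).trans_le hp.1)

theorem IsR2Pair.exists_isLiftableCollapse_coversAt (h : IsR2Pair le1 le2)
    (hcov : IsCovering le1 le2 F cov) (hab : le2 a b) (hlt : a < b) :
    ∃ g, IsLiftableCollapse le1 le2 a b cov g ∧ ∀ r s,
      (cov r ∈ Ico a b → b ≤ cov s → F.le1 r s → le1 a (cov s) ∧ ¬ F.le2 r s) →
        CoversAt le1 le2 F g r s := by
  obtain ⟨g, hg, hle1⟩ := h.exists_isLiftableCollapse hab hlt cov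
  have hcov' := isCovering_iff_forall_coversAt.1 hcov
  refine ⟨g, hg, fun r s hcross => hg.coversAt hlt.le (hcov' r s) (fun hr hs =>
    (hcov' r s).of_diagram_eq (hg.diagram_eq hr hs)) fun hr hs => ⟨fun hrs => ?_, fun hrs =>
      ((hcross hr hs (F.le2_sub_le1 _ _ hrs)).2 hrs).elim⟩⟩
  have hrb : le1 (cov r) b := h.le1_of_le1_of_le (hcov.2.1 r s hrs) hr.2.le hs
  exact h.le1_trans (hle1 r hr.2 hrb) (hcross hr hs hrs).1

variable (h : IsR2Pair le1 le2) (hmin : Minimal (IsCovering le1 le2 F) cov)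
include h hmin

-- Otherwise collapsing `[a, b)` would give a smaller covering.
theorem exists_le1_of_minimal (hab : le1 a b) (hp : cov p ∈ Ico a b) :
    ∃ r s, cov r ∈ Ico a b ∧ b ≤ cov s ∧ F.le1 r s := by
  by_contra! hno
  obtain ⟨g, hg, hdiag⟩ := (h.elemSub₁ hab).exists_isCollapse cov
  have hcov := isCovering_iff_forall_coversAt.1 hmin.1
  refine hg.not_isCovering_of_minimal hmin hp (isCovering_iff_forall_coversAt.2 fun r s => ?_)
  refine hg.coversAt (h.le_of_le1 hab) (hcov r s) (fun hr hs => (hcov r s).of_diagram_eq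
    (hdiag r s hr hs)) fun hr hs => ⟨fun hrs => (hno r s hr hs hrs).elim, fun hrs =>
      (hno r s hr hs (F.le2_sub_le1 _ _ hrs)).elim⟩

theorem exists_le2_of_minimal (hab : le2 a b) (hp : cov p ∈ Ico a b) :
    ∃ r s, cov r ∈ Ico a b ∧ b ≤ cov s ∧ F.le2 r s := by
  by_contra! hno
  obtain ⟨g, hg, hcov⟩ := h.exists_isLiftableCollapse_coversAt hmin.1 hab (hp.1.trans_lt hp.2)
  refine hg.not_isCovering_of_minimal hmin hp (isCovering_iff_forall_coversAt.2 fun r s => ?_)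
  refine hcov r s fun hr hs hrs => ⟨?_, hno r s hr hs⟩
  exact h.le1_trans (h.le1_of_le1_of_le (h.le1_of_le2 hab) hr.1 hr.2.le) (hmin.1.2.1 r s hrs)

-- Collapse `[a, b)` along `≤₂` and then `[a, δ)` along `≤₁`, and lift the result back to `b`: in
-- total, the part of the covering lying in `[b, δ)` has been moved below `b`.
theorem exists_le2_or_exists_le1_of_minimal {δ : Ordinal.{u}} (hab : le2 a b) (hlt : a < b)
    (haδ : le1 a δ) (hp : cov p ∈ Ico b δ) :
    (∃ r s, cov r ∈ Ico a b ∧ cov s ∈ Ico b δ ∧ F.le2 r s) ∨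
      ∃ r s, cov r ∈ Ico b δ ∧ δ ≤ cov s ∧ F.le1 r s := by
  by_contra! hno
  obtain ⟨hno2, hno1⟩ := hno
  have hbδ : b ≤ δ := (hp.1.trans_lt hp.2).le
  obtain ⟨g, hg, hg_cov⟩ := h.exists_isLiftableCollapse_coversAt hmin.1 hab hlt
  have hg_lt (i : F.P) (hi : cov i < δ) : g i < δ := (hg.le i).trans_lt hi
  obtain ⟨y, hy, hy_diag⟩ := (h.elemSub₁ haδ).exists_isCollapse g
  obtain ⟨z, hz_eq, hz_lt, hz_above, hz_diag⟩ := hg.exists_lift y fun i hi =>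
    hy.eq_of_lt i (hg.lt_of_lt i hi)
  have hz : IsCollapse b δ cov z := by
    refine ⟨hz_eq, fun i hi => hz_lt i (hy.lt_of_lt i (hg_lt i hi)), fun i hi => ?_⟩
    have hyi : y i = cov i := by
      rw [← hg.eq_of_le i (hbδ.trans hi)]
      exact hy.eq_of_le i (hi.trans_eq (hg.eq_of_le i (hbδ.trans hi)).symm)
    rw [hz_above i (hyi ▸ hlt.le.trans (hbδ.trans hi)), hyi]
  have hz_diag_g (r s : F.P) (hr : cov r < δ) (hs : cov s < δ) :
      diagram le1 le2 z r s = diagram le1 le2 g r s :=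
    (hz_diag r s (hy.lt_of_lt r (hg_lt r hr)) (hy.lt_of_lt s (hg_lt s hs))).trans
      (hy_diag r s (hg_lt r hr) (hg_lt s hs))
  refine hz.not_isCovering_of_minimal hmin hp (isCovering_iff_forall_coversAt.2 fun r s => ?_)
  refine hz.coversAt hbδ (isCovering_iff_forall_coversAt.1 hmin.1 r s) (fun hr hs => ?_)
    fun hr hs => ⟨fun hrs => (hno1 r s hr hs hrs).elim, fun hrs =>
      (hno1 r s hr hs (F.le2_sub_le1 _ _ hrs)).elim⟩
  refine (hg_cov r s fun hra hsb _ => ?_).of_diagram_eq (hz_diag_g r s hr hs)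
  exact ⟨h.le1_of_le1_of_le haδ (hlt.le.trans hsb) hs.le, hno2 r s hra ⟨hsb, hs⟩⟩

end MinimalCovering

section Tightness

variable {F : RForest} {cov : F.P → Ordinal.{u}} {p q : F.P}

theorem IsCovering.injective (hcov : IsCovering le1 le2 F cov) : Function.Injective cov :=
  fun p q heq => F.le0_antisymm p q ((hcov.1 p q).2 heq.le) ((hcov.1 q p).2 heq.ge)

variable (h : IsR2Pair le1 le2) (hmin : Minimal (IsCovering le1 le2 F) cov)
include h hmin

theorem exists_le1_of_le1_of_minimal {γ : Ordinal.{u}} (hγ : le1 (cov p) γ) :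
    ∃ s, F.le1 p s ∧ γ ≤ cov s := by
  induction γ using WellFoundedLT.induction with
  | ind γ ih =>
    rcases (h.le_of_le1 hγ).eq_or_lt with heq | hlt
    · exact ⟨p, F.le1_refl p, heq.ge⟩
    obtain ⟨r, s, hr, hs, hrs⟩ := exists_le1_of_minimal h hmin hγ ⟨le_rfl, hlt⟩
    obtain ⟨t, hpt, hrt⟩ := ih (cov r) hr.2 (h.le1_of_le1_of_le hγ hr.1 hr.2.le)
    have hpr : F.le1 p r := F.respects1 p r t ((hmin.1.1 p r).2 hr.1) ((hmin.1.1 r t).2 hrt) hpt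
    exact ⟨s, F.le1_trans p r s hpr hrs, hs⟩

theorem le1_of_le1_of_minimal (hpq : le1 (cov p) (cov q)) : F.le1 p q := by
  obtain ⟨s, hps, hqs⟩ := exists_le1_of_le1_of_minimal h hmin hpq
  exact F.respects1 p q s ((hmin.1.1 p q).2 (h.le_of_le1 hpq)) ((hmin.1.1 q s).2 hqs) hps

theorem le2_of_le2_of_crossing {r s : F.P} (hpq : le2 (cov p) (cov q))
    (ih : ∀ r, cov r < cov q → le2 (cov p) (cov r) → F.le2 p r)
    (hr : cov r ∈ Ico (cov p) (cov q)) (hs : cov q ≤ cov s) (hrs : F.le2 r s) : F.le2 p s := by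
  have hpr : le1 (cov p) (cov r) := h.le1_of_le1_of_le (h.le1_of_le2 hpq) hr.1 hr.2.le
  have hrq : le1 (cov r) (cov q) :=
    h.le1_of_le1_of_le (hmin.1.2.1 r s (F.le2_sub_le1 r s hrs)) hr.2.le hs
  exact F.le2_trans p r s (ih r hr.2 (h.le2_of_le2_of_le1 hpq hpr hrq)) hrs

-- If the `≤₂`-connection that crosses `q` ends at a point which is not `≥₁ q`, consider the
-- interval from `q` to the least such point `t`: no `≤₁`-connection can lead out of it, as it
-- would start `≤₁`-above `q` and thus put `t` `≤₁`-above `q` as well.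
theorem le2_of_le2_of_minimal (hpq : le2 (cov p) (cov q)) : F.le2 p q := by
  have ⟨hcov0, _, hcov2⟩ := hmin.1
  induction hq : cov q using WellFoundedLT.induction generalizing q with
  | ind γ ih =>
    subst hq
    have hpq1 : le1 (cov p) (cov q) := h.le1_of_le2 hpq
    rcases (h.le_of_le1 hpq1).eq_or_lt with heq | hlt
    · exact hmin.1.injective heq ▸ F.le2_refl p
    have le2_of_crossing {r s : F.P} (hr : cov r ∈ Ico (cov p) (cov q)) (hs : cov q ≤ cov s)
        (hrs : F.le2 r s) : F.le2 p s :=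
      le2_of_le2_of_crossing h hmin hpq (fun r hr hpr => ih _ hr hpr rfl) hr hs hrs
    have le2_of_le1 {s : F.P} (hqs : F.le1 q s) (hps : F.le2 p s) : F.le2 p q :=
      F.respects2 p q s (le1_of_le1_of_minimal h hmin hpq1) hqs hps
    obtain ⟨r, s, hr, hs, hrs⟩ := exists_le2_of_minimal h hmin hpq ⟨le_rfl, hlt⟩
    by_cases hqs : F.le1 q s
    · exact le2_of_le1 hqs (le2_of_crossing hr hs hrs)
    obtain ⟨t, ⟨hqt, hqt1⟩, ht⟩ := Set.exists_min_image {t | cov q ≤ cov t ∧ ¬ F.le1 q t} cov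
      (Set.toFinite _) ⟨s, hs, hqs⟩
    have le1_of_lt {t' : F.P} (ht' : cov t' ∈ Ico (cov q) (cov t)) : F.le1 q t' :=
      not_not.1 fun hqt' => (ht t' ⟨ht'.1, hqt'⟩).not_gt ht'.2
    have hqt_lt : cov q < cov t := hqt.lt_of_ne fun heq =>
      hqt1 (hmin.1.injective heq ▸ F.le1_refl q)
    have hpt : le1 (cov p) (cov t) :=
      h.le1_of_le1_of_le (h.le1_of_le2 (hcov2 p s (le2_of_crossing hr hs hrs)))
        (hlt.le.trans hqt) (ht s ⟨hs, hqs⟩)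
    rcases exists_le2_or_exists_le1_of_minimal h hmin hpq hlt hpt ⟨le_rfl, hqt_lt⟩ with
      ⟨r', s', hr', hs', hrs'⟩ | ⟨r', s', hr', hs', hrs'⟩
    · exact le2_of_le1 (le1_of_lt hs') (le2_of_crossing hr' hs'.1 hrs')
    · have hqs' : F.le1 q s' := F.le1_trans q r' s' (le1_of_lt hr') hrs'
      exact (hqt1 (F.respects1 q t s' ((hcov0 q t).2 hqt) ((hcov0 t s').2 hs') hqs')).elim

theorem exists_le2_of_le2_of_minimal {γ : Ordinal.{u}} (hγ : le2 (cov p) γ) :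
    ∃ s, F.le2 p s ∧ γ ≤ cov s := by
  rcases (h.le_of_le1 (h.le1_of_le2 hγ)).eq_or_lt with heq | hlt
  · exact ⟨p, F.le2_refl p, heq.ge⟩
  obtain ⟨r, s, hr, hs, hrs⟩ := exists_le2_of_minimal h hmin hγ ⟨le_rfl, hlt⟩
  have hpr : le1 (cov p) (cov r) := h.le1_of_le1_of_le (h.le1_of_le2 hγ) hr.1 hr.2.le
  have hrγ : le1 (cov r) γ :=
    h.le1_of_le1_of_le (hmin.1.2.1 r s (F.le2_sub_le1 r s hrs)) hr.2.le hs
  have hpr2 : F.le2 p r := le2_of_le2_of_minimal h hmin (h.le2_of_le2_of_le1 hγ hpr hrγ)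
  exact ⟨s, F.le2_trans p r s hpr2 hrs, hs⟩

end Tightness

section Isominimal

variable {F : RForest} {cov : F.P → Ordinal.{u}} {X Y : Finset Ordinal.{u}}

theorem exists_isGreatest_apply {α : Type*} [LinearOrder α] [Finite κ] {f : κ → α} {S : Set α}
    (hne : ∃ q, f q ∈ S) (hf : ∀ γ ∈ S, ∃ s, f s ∈ S ∧ γ ≤ f s) : ∃ q, IsGreatest S (f q) := by
  obtain ⟨q, hq, hmax⟩ := Set.exists_max_image {q | f q ∈ S} f (Set.toFinite _) hne
  refine ⟨q, hq, fun γ hγ => ?_⟩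
  obtain ⟨s, hs, hγs⟩ := hf γ hγ
  exact hγs.trans (hmax s hs)

theorem exists_isGreatest_le1_of_minimal (h : IsR2Pair le1 le2)
    (hmin : Minimal (IsCovering le1 le2 F) cov) (p : F.P) :
    ∃ q, IsGreatest {γ | le1 (cov p) γ} (cov q) := by
  refine exists_isGreatest_apply ⟨p, hmin.1.2.1 p p (F.le1_refl p)⟩ fun γ hγ => ?_
  obtain ⟨s, hps, hγs⟩ := exists_le1_of_le1_of_minimal h hmin hγ
  exact ⟨s, hmin.1.2.1 p s hps, hγs⟩

theorem exists_isGreatest_le2_of_minimal (h : IsR2Pair le1 le2)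
    (hmin : Minimal (IsCovering le1 le2 F) cov) (p : F.P) :
    ∃ q, IsGreatest {γ | le2 (cov p) γ} (cov q) := by
  refine exists_isGreatest_apply ⟨p, hmin.1.2.2 p p (F.le2_refl p)⟩ fun γ hγ => ?_
  obtain ⟨s, hps, hγs⟩ := exists_le2_of_le2_of_minimal h hmin hγ
  exact ⟨s, hmin.1.2.2 p s hps, hγs⟩

theorem pwLE.coe_le_coe (hXY : pwLE X Y) {e : κ ≃ {x // x ∈ X}} {d : κ ≃ {y // y ∈ Y}}
    (hed : ∀ i j, (e i : Ordinal) ≤ e j ↔ (d i : Ordinal) ≤ d j) (i : κ) :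
    (e i : Ordinal) ≤ d i := by
  obtain ⟨hcard, hle⟩ := hXY
  let f : {x // x ∈ X} ≃o {y // y ∈ Y} :=
    { e.symm.trans d with
      map_rel_iff' := fun {x y} => by simpa using (hed (e.symm x) (e.symm y)).symm }
  have hf : f = (X.orderIsoOfFin rfl).symm.trans (Y.orderIsoOfFin hcard.symm) :=
    Subsingleton.elim _ _
  have hfe : f (e i) = d i := congrArg d (e.symm_apply_apply i)
  rw [← hfe, hf]
  simpa using hle ((X.orderIsoOfFin rfl).symm (e i))

theorem IsIsominimalRealization.exists_minimal_isCovering (h : IsR2Pair le1 le2)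
    (hX : IsIsominimalRealization le1 le2 F X) :
    ∃ cov, Minimal (IsCovering le1 le2 F) cov ∧ ∀ β, β ∈ X ↔ ∃ p, cov p = β := by
  obtain ⟨⟨e, he⟩, hmin⟩ := hX
  have hcov : IsCovering le1 le2 F fun p => e p :=
    ⟨fun p q => (he p q).1, fun p q => (he p q).2.1.1, fun p q => (he p q).2.2.1⟩
  refine ⟨_, ⟨hcov, fun c hc _ p => ?_⟩,
    fun β => ⟨fun hβ => ⟨e.symm ⟨β, hβ⟩, by simp⟩, fun ⟨p, hp⟩ => hp ▸ (e p).2⟩⟩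
  obtain ⟨c₀, hc₀_le, hc₀⟩ := exists_minimal_le_of_wellFoundedLT (IsCovering le1 le2 F) c hc
  let d := (Equiv.ofInjective c₀ hc₀.1.injective).trans (Set.finite_range c₀).subtypeEquivToFinset
  have hd : Realizes le1 le2 F (Set.finite_range c₀).toFinset :=
    ⟨d, fun p q => ⟨hc₀.1.1 p q, ⟨hc₀.1.2.1 p q, le1_of_le1_of_minimal h hc₀⟩,
      hc₀.1.2.2 p q, le2_of_le2_of_minimal h hc₀⟩⟩
  exact ((hmin _ hd).coe_le_coe (e := e) (d := d)
    (fun p q => (he p q).1.symm.trans (hc₀.1.1 p q)) p).trans (hc₀_le p)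

end Isominimal

end R2

theorem stmt11 (le1 le2 : Ordinal → Ordinal → Prop) (h : IsR2Pair le1 le2)
    (F : RForest) (X : Finset Ordinal) (hX : IsIsominimalRealization le1 le2 F X) :
    ∀ β ∈ X,
      (∃ m, (le1 β m ∧ ∀ γ, le1 β γ → γ ≤ m) ∧ m ∈ X) ∧
      (∃ m, (le2 β m ∧ ∀ γ, le2 β γ → γ ≤ m) ∧ m ∈ X) := by
  intro β hβ
  obtain ⟨cov, hmin, hcovX⟩ := hX.exists_minimal_isCovering h
  obtain ⟨p, rfl⟩ := (hcovX β).1 hβ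
  obtain ⟨q₁, hq₁, hmax₁⟩ := exists_isGreatest_le1_of_minimal h hmin p
  obtain ⟨q₂, hq₂, hmax₂⟩ := exists_isGreatest_le2_of_minimal h hmin p
  exact ⟨⟨cov q₁, ⟨hq₁, fun _ hγ => hmax₁ hγ⟩, (hcovX _).2 ⟨q₁, rfl⟩⟩,
    ⟨cov q₂, ⟨hq₂, fun _ hγ => hmax₂ hγ⟩, (hcovX _).2 ⟨q₂, rfl⟩⟩⟩
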